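/- Let γ_B1, ε_B1 ∈ [0,1]. Suppose the closeness-of-diagonals condition holds with ε_B1, i.e., for each ℓ ∈ {0,1}: |P(Y | V ∩ V̂ᶜ ∩ L_ℓ) − P(Y | Vᶜ ∩ V̂ ∩ L_ℓ)| ≤ ε_B1, and suppose |r₀ − p₀| ≤ γ_B1 and |r₁ − p₁| ≤ γ_B1. Then |G − Ĝ| ≤ 2(γ_B1 + ε_B1). -/

import Mathlib

open MeasureTheory

/-- Conditional probability `P(A | B) = μ(A ∩ B) / μ(B)` as a real number. -/
noncomputable def condP {Ω : Type*} [MeasurableSpace Ω] (μ : Measure Ω) (A B : Set Ω) : ℝ :=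
  (μ (A ∩ B)).toReal / (μ B).toReal

section CondP

variable {Ω : Type*} [MeasurableSpace Ω] {μ : Measure Ω} {A B C : Set Ω}

theorem condP_eq_measureReal_div (μ : Measure Ω) (A B : Set Ω) :
    condP μ A B = μ.real (A ∩ B) / μ.real B :=
  rfl

theorem condP_nonneg : 0 ≤ condP μ A B :=
  div_nonneg measureReal_nonneg measureReal_nonneg

variable [IsFiniteMeasure μ]

theorem condP_le_one : condP μ A B ≤ 1 :=
  div_le_one_of_le₀ (measureReal_mono Set.inter_subset_right) measureReal_nonneg

theorem abs_condP_sub_condP_le_one {A' B' : Set Ω} : |condP μ A B - condP μ A' B'| ≤ 1 :=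
  abs_sub_le_of_nonneg_of_le condP_nonneg condP_le_one condP_nonneg condP_le_one

theorem condP_univ (hB : μ B ≠ 0) : condP μ Set.univ B = 1 := by
  rw [condP_eq_measureReal_div, Set.univ_inter, div_self ((measureReal_ne_zero_iff).2 hB)]

theorem condP_inter_add_condP_inter_compl (hC : MeasurableSet C) :
    condP μ (A ∩ C) B + condP μ (A ∩ Cᶜ) B = condP μ A B := by
  simp only [condP_eq_measureReal_div]
  rw [← add_div, Set.inter_right_comm A C, Set.inter_right_comm A Cᶜ, ← Set.sdiff_eq,
    measureReal_inter_add_sdiff hC]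

theorem one_sub_condP_compl (hC : MeasurableSet C) (hB : μ B ≠ 0) :
    1 - condP μ Cᶜ B = condP μ C B := by
  rw [sub_eq_iff_eq_add, ← condP_univ hB, ← condP_inter_add_condP_inter_compl hC, Set.univ_inter,
    Set.univ_inter]

theorem condP_mul_condP_inter : condP μ C B * condP μ A (B ∩ C) = condP μ (A ∩ C) B := by
  have hset : A ∩ (B ∩ C) = A ∩ C ∩ B := by rw [Set.inter_comm B, Set.inter_assoc]
  simp only [condP_eq_measureReal_div, hset, Set.inter_comm C B]
  obtain hnull | hne := eq_or_ne (μ.real (B ∩ C)) 0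
  · have hnull' : μ.real (A ∩ C ∩ B) = 0 :=
      measureReal_mono_null (hset ▸ Set.inter_subset_right) hnull
    rw [hnull, hnull', zero_div, zero_div, zero_mul]
  · exact div_mul_div_cancel₀' hne _ _

theorem condP_eq_condP_inter_mix (hC : MeasurableSet C) (hB : μ B ≠ 0) :
    condP μ A B =
      (1 - condP μ Cᶜ B) * condP μ A (B ∩ C) + condP μ Cᶜ B * condP μ A (B ∩ Cᶜ) := by
  rw [one_sub_condP_compl hC hB, condP_mul_condP_inter, condP_mul_condP_inter,
    condP_inter_add_condP_inter_compl hC]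

/-- Given `B` and given `C`, the probabilities of `A` are mixtures with the common component
`P(A | B ∩ C)`. Changing the mixing weight costs the first term, changing the other component
costs the second. -/
theorem abs_condP_sub_condP_le (hB : MeasurableSet B) (hC : MeasurableSet C)
    (hB₀ : μ B ≠ 0) (hC₀ : μ C ≠ 0) :
    |condP μ A B - condP μ A C| ≤
      |condP μ Cᶜ B - condP μ Bᶜ C| + |condP μ A (B ∩ Cᶜ) - condP μ A (C ∩ Bᶜ)| := by
  set r := condP μ Cᶜ B
  set p := condP μ Bᶜ C
  set a := condP μ A (B ∩ C)
  set b := condP μ A (B ∩ Cᶜ)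
  set c := condP μ A (C ∩ Bᶜ)
  have hAB : condP μ A B = (1 - r) * a + r * b := condP_eq_condP_inter_mix hC hB₀
  have hAC : condP μ A C = (1 - p) * a + p * c := by
    rw [condP_eq_condP_inter_mix hB hC₀, Set.inter_comm C B]
  have hca : |c - a| ≤ 1 := abs_condP_sub_condP_le_one
  have hr : |r| ≤ 1 := (abs_of_nonneg condP_nonneg).trans_le condP_le_one
  calc |condP μ A B - condP μ A C|
      = |(r - p) * (c - a) + r * (b - c)| := by rw [hAB, hAC]; ring_nf
    _ ≤ |r - p| * |c - a| + |r| * |b - c| := by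
      simpa only [abs_mul] using abs_add_le ((r - p) * (c - a)) (r * (b - c))
    _ ≤ |r - p| + |b - c| :=
      add_le_add (mul_le_of_le_one_right (abs_nonneg _) hca)
        (mul_le_of_le_one_left (abs_nonneg _) hr)

theorem abs_condP_inter_sub_condP_inter_le {L : Set Ω} (hB : MeasurableSet B)
    (hC : MeasurableSet C) (hL : MeasurableSet L) (hBL : μ (B ∩ L) ≠ 0) (hCL : μ (C ∩ L) ≠ 0) :
    |condP μ A (B ∩ L) - condP μ A (C ∩ L)| ≤
      |condP μ Cᶜ (B ∩ L) - condP μ Bᶜ (C ∩ L)| +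
        |condP μ A (B ∩ Cᶜ ∩ L) - condP μ A (Bᶜ ∩ C ∩ L)| := by
  have hcompl (S T : Set Ω) : condP μ (S ∩ L)ᶜ (T ∩ L) = condP μ Sᶜ (T ∩ L) := by
    have hinter : (S ∩ L)ᶜ ∩ (T ∩ L) = Sᶜ ∩ (T ∩ L) := by grind
    rw [condP, condP, hinter]
  have hdiff (S T : Set Ω) : S ∩ L ∩ (T ∩ L)ᶜ = S ∩ Tᶜ ∩ L := by grind
  simpa only [hcompl, hdiff, Set.inter_comm Bᶜ C] using
    abs_condP_sub_condP_le (A := A) (hB.inter hL) (hC.inter hL) hBL hCL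

end CondP

/-- Case B1: if the diagonals of the confusion matrix are `ε_B1`-close on each slice, and the
precision and recall errors are `γ_B1`-close within each slice, then
`|G - Ĝ| ≤ 2 (γ_B1 + ε_B1)`. -/
theorem stmt_10 {Ω : Type*} [MeasurableSpace Ω] (μ : Measure Ω) [IsProbabilityMeasure μ]
    (Y V Vh : Set Ω) (L : Bool → Set Ω) (γB1 εB1 : ℝ)
    (hY : MeasurableSet Y) (hV : MeasurableSet V) (hVh : MeasurableSet Vh)
    (hL : ∀ l, MeasurableSet (L l))
    (hγB1 : γB1 ∈ Set.Icc (0 : ℝ) 1) (hεB1 : εB1 ∈ Set.Icc (0 : ℝ) 1)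
    (hposVL : ∀ l, 0 < μ (V ∩ L l))
    (hposVhL : ∀ l, 0 < μ (Vh ∩ L l))
    (hpos10 : ∀ l, 0 < μ (V ∩ Vhᶜ ∩ L l))
    (hpos01 : ∀ l, 0 < μ (Vᶜ ∩ Vh ∩ L l))
    (hdiag : ∀ l : Bool,
      |condP μ Y (V ∩ Vhᶜ ∩ L l) - condP μ Y (Vᶜ ∩ Vh ∩ L l)| ≤ εB1)
    (hpr : ∀ l : Bool,
      |condP μ Vhᶜ (V ∩ L l) - condP μ Vᶜ (Vh ∩ L l)| ≤ γB1) :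
    |(condP μ Y (V ∩ L true) - condP μ Y (V ∩ L false))
      - (condP μ Y (Vh ∩ L true) - condP μ Y (Vh ∩ L false))|
      ≤ 2 * (γB1 + εB1) := by
  have hslice (l : Bool) : |condP μ Y (V ∩ L l) - condP μ Y (Vh ∩ L l)| ≤ γB1 + εB1 :=
    (abs_condP_inter_sub_condP_inter_le hV hVh (hL l) (hposVL l).ne' (hposVhL l).ne').trans
      (add_le_add (hpr l) (hdiag l))
  rw [sub_sub_sub_comm, two_mul]
  exact (abs_sub _ _).trans (add_le_add (hslice true) (hslice false))
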